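/- Let Ω = (a,b) ⊂ ℝ be a bounded open interval with a < b, let D > 0, α ≥ 0, ε ∈ (0,1), T > 0, let γ, ĥ ∈ C²([0,∞)) and Γ ∈ C¹([0,∞)), and let (w,v,u,Θ) be a classical solution of the ε-regularized system on Ω × (0,T). Then for all t ∈ (0,T): d/dt { (1/2)∫_a^b w_x² + (1/2)∫_a^b γ(Θ) v_xx² + ∫_a^b ĥ(Θ) u_xx v_xx + ε ∫_a^b ĥ(Θ) u_xxx² } + α ∫_a^b w_x² + ε ∫_a^b w_xx² + ε ∫_a^b γ(Θ) v_xxx² + 2ε² ∫_a^b ĥ(Θ) u_xxxx² = ∫_a^b ĥ(Θ) v_xx² + (1/2)∫_a^b γ'(Θ) Θ_t v_xx² + ∫_a^b ĥ'(Θ) Θ_t u_xx v_xx + ∫_a^b γ'(Θ) Θ_x v_xx w_x + ∫_a^b ĥ'(Θ) Θ_x u_xx w_x + ∫_a^b γ'(Θ) Θ_xx v_x w_x + ∫_a^b ĥ'(Θ) Θ_xx u_x w_x + ∫_a^b γ''(Θ) Θ_x² v_x w_x + ∫_a^b ĥ''(Θ) Θ_x² u_x w_x + ε ∫_a^b ĥ'(Θ)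 Θ_t u_xxx² − ε ∫_a^b γ'(Θ) Θ_x v_xx v_xxx − ε ∫_a^b ĥ'(Θ) Θ_x u_xx v_xxx − ε ∫_a^b ĥ'(Θ) Θ_x u_xxx v_xx − 2ε² ∫_a^b ĥ'(Θ) Θ_x u_xxx u_xxxx. -/

import Mathlib

/-! The identity is one integration by parts. Let `L - R` denote the difference of the two
integrands once the time derivative of the energy has been taken under the integral sign. After
inserting the equations for `w_t`, `v_xxt`, `u_xxt`, `u_xxxt`, one has `L - R = ∂ₓ G` with
`G = w_x w_t + α w w_x - γ'(Θ) Θ_x v_x w_x - ĥ'(Θ) Θ_x u_x w_x + ε γ(Θ) v_xx v_xxx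
  + ε ĥ(Θ) u_xx v_xxx + ε ĥ(Θ) u_xxx v_xx + 2 ε² ĥ(Θ) u_xxx u_xxxx`,
and every summand of `G` contains one of `w_x`, `v_xxx`, `u_xxx` as a factor.

These factors vanish at the endpoints: `w_x` by hypothesis, and `v_xxx`, `u_xxx` because the
equations for `v` and `u`, differentiated in `x` and extended to the boundary by continuity, express
`ε v_xxx` and `ε u_xxx` through `v_xt`, `w_x`, `u_xt`, `v_x`, all of which are zero there.

`integral_identity` is this computation at a fixed time, `bdry_third` gives the vanishing of the
third derivatives, `linear_pde_pdx` differentiates the linear equations in `x`, and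
`hasDerivAt_integral_param` takes the time derivative under the integral. -/

open MeasureTheory Set

/-- Partial derivative in the space variable. -/
noncomputable def pdx (f : ℝ → ℝ → ℝ) : ℝ → ℝ → ℝ := fun x t => deriv (fun y => f y t) x

/-- Partial derivative in the time variable. -/
noncomputable def pdt (f : ℝ → ℝ → ℝ) : ℝ → ℝ → ℝ := fun x t => deriv (fun s => f x s) t

/-- A classical solution of the ε-regularized system
`w_t = ε w_xx + (γ(Θ) v_x)_x + (ĥ(Θ) u_x)_x − α w`,
`v_t = ε v_xx + w`, `u_t = ε u_xx + v`, `Θ_t = D Θ_xx + Γ(Θ) v_x²`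
on `(a,b) × (0,T)` with homogeneous Neumann boundary conditions. -/
def IsEpsSolution (a b D α ε T : ℝ) (γ hγ Γ : ℝ → ℝ) (w v u Θ : ℝ → ℝ → ℝ) : Prop :=
  ContDiff ℝ (⊤ : ℕ∞) (Function.uncurry w) ∧ ContDiff ℝ (⊤ : ℕ∞) (Function.uncurry v) ∧
  ContDiff ℝ (⊤ : ℕ∞) (Function.uncurry u) ∧ ContDiff ℝ (⊤ : ℕ∞) (Function.uncurry Θ) ∧
  (∀ x ∈ Ioo a b, ∀ t ∈ Ioo (0:ℝ) T,
      pdt w x t = ε * pdx (pdx w) x t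
        + pdx (fun y s => γ (Θ y s) * pdx v y s) x t
        + pdx (fun y s => hγ (Θ y s) * pdx u y s) x t - α * w x t) ∧
  (∀ x ∈ Ioo a b, ∀ t ∈ Ioo (0:ℝ) T, pdt v x t = ε * pdx (pdx v) x t + w x t) ∧
  (∀ x ∈ Ioo a b, ∀ t ∈ Ioo (0:ℝ) T, pdt u x t = ε * pdx (pdx u) x t + v x t) ∧
  (∀ x ∈ Ioo a b, ∀ t ∈ Ioo (0:ℝ) T,
      pdt Θ x t = D * pdx (pdx Θ) x t + Γ (Θ x t) * (pdx v x t) ^ 2) ∧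
  (∀ t ∈ Ioo (0:ℝ) T,
      pdx w a t = 0 ∧ pdx w b t = 0 ∧ pdx v a t = 0 ∧ pdx v b t = 0 ∧
      pdx u a t = 0 ∧ pdx u b t = 0 ∧ pdx Θ a t = 0 ∧ pdx Θ b t = 0)

/-! ### Calculus of the partial derivatives -/

/-- Smoothness of a function of two real variables, in curried form. -/
def Smooth2 (f : ℝ → ℝ → ℝ) : Prop := ContDiff ℝ (⊤ : ℕ∞) (Function.uncurry f)

lemma hasDerivAt_fderiv_left {f : ℝ → ℝ → ℝ} (hf : Smooth2 f) (x t : ℝ) :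
    HasDerivAt (fun y => f y t) (fderiv ℝ (Function.uncurry f) (x, t) (1, 0)) x := by
  have h1 : HasFDerivAt (Function.uncurry f) (fderiv ℝ (Function.uncurry f) (x, t)) (x, t) :=
    (hf.differentiable (by simp) (x, t)).hasFDerivAt
  have h2 : HasDerivAt (fun y : ℝ => (y, t)) ((1 : ℝ), (0 : ℝ)) x :=
    (hasDerivAt_id x).prodMk (hasDerivAt_const x t)
  exact h1.comp_hasDerivAt x h2

lemma hasDerivAt_fderiv_right {f : ℝ → ℝ → ℝ} (hf : Smooth2 f) (x t : ℝ) :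
    HasDerivAt (fun s => f x s) (fderiv ℝ (Function.uncurry f) (x, t) (0, 1)) t := by
  have h1 : HasFDerivAt (Function.uncurry f) (fderiv ℝ (Function.uncurry f) (x, t)) (x, t) :=
    (hf.differentiable (by simp) (x, t)).hasFDerivAt
  have h2 : HasDerivAt (fun s : ℝ => (x, s)) ((0 : ℝ), (1 : ℝ)) t :=
    (hasDerivAt_const t x).prodMk (hasDerivAt_id t)
  exact h1.comp_hasDerivAt t h2

lemma pdx_eq_fderiv {f : ℝ → ℝ → ℝ} (hf : Smooth2 f) (x t : ℝ) :
    pdx f x t = fderiv ℝ (Function.uncurry f) (x, t) (1, 0) :=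
  (hasDerivAt_fderiv_left hf x t).deriv

lemma pdt_eq_fderiv {f : ℝ → ℝ → ℝ} (hf : Smooth2 f) (x t : ℝ) :
    pdt f x t = fderiv ℝ (Function.uncurry f) (x, t) (0, 1) :=
  (hasDerivAt_fderiv_right hf x t).deriv

lemma Smooth2.hasDerivAt_pdx {f : ℝ → ℝ → ℝ} (hf : Smooth2 f) (x t : ℝ) :
    HasDerivAt (fun y => f y t) (pdx f x t) x := by
  rw [pdx_eq_fderiv hf]; exact hasDerivAt_fderiv_left hf x t

lemma Smooth2.hasDerivAt_pdt {f : ℝ → ℝ → ℝ} (hf : Smooth2 f) (x t : ℝ) :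
    HasDerivAt (fun s => f x s) (pdt f x t) t := by
  rw [pdt_eq_fderiv hf]; exact hasDerivAt_fderiv_right hf x t

lemma Smooth2.fderiv_apply {f : ℝ → ℝ → ℝ} (hf : Smooth2 f) (v : ℝ × ℝ) :
    ContDiff ℝ (⊤ : ℕ∞) (fun p => fderiv ℝ (Function.uncurry f) p v) :=
  (ContDiff.fderiv_right hf (m := (⊤ : ℕ∞)) (by simp)).clm_apply contDiff_const

lemma Smooth2.pdx {f : ℝ → ℝ → ℝ} (hf : Smooth2 f) : Smooth2 (pdx f) := by
  have : Function.uncurry (_root_.pdx f) = fun p => fderiv ℝ (Function.uncurry f) p (1, 0) := by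
    ext ⟨x, t⟩; exact pdx_eq_fderiv hf x t
  rw [Smooth2, this]; exact hf.fderiv_apply _

lemma Smooth2.pdt {f : ℝ → ℝ → ℝ} (hf : Smooth2 f) : Smooth2 (pdt f) := by
  have : Function.uncurry (_root_.pdt f) = fun p => fderiv ℝ (Function.uncurry f) p (0, 1) := by
    ext ⟨x, t⟩; exact pdt_eq_fderiv hf x t
  rw [Smooth2, this]; exact hf.fderiv_apply _

lemma Smooth2.pdt_pdx {f : ℝ → ℝ → ℝ} (hf : Smooth2 f) (x t : ℝ) :
    _root_.pdt (_root_.pdx f) x t = _root_.pdx (_root_.pdt f) x t := by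
  have hd : DifferentiableAt ℝ (fderiv ℝ (Function.uncurry f)) (x, t) :=
    (ContDiff.fderiv_right hf (m := (⊤ : ℕ∞)) (by simp)).differentiable (by simp) (x, t)
  have key : ∀ v : ℝ × ℝ, HasFDerivAt (fun p => fderiv ℝ (Function.uncurry f) p v)
      ((fderiv ℝ (fderiv ℝ (Function.uncurry f)) (x, t)).flip v) (x, t) := by
    intro v
    have := hd.hasFDerivAt.clm_apply (hasFDerivAt_const v (x, t))
    simpa using this
  have e1 : Function.uncurry (_root_.pdx f) = fun p => fderiv ℝ (Function.uncurry f) p (1, 0) := by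
    ext ⟨x, t⟩; exact pdx_eq_fderiv hf x t
  have e2 : Function.uncurry (_root_.pdt f) = fun p => fderiv ℝ (Function.uncurry f) p (0, 1) := by
    ext ⟨x, t⟩; exact pdt_eq_fderiv hf x t
  have hsymm : IsSymmSndFDerivAt ℝ (Function.uncurry f) (x, t) :=
    hf.contDiffAt.isSymmSndFDerivAt (by simp only [minSmoothness_of_isRCLikeNormedField]; exact WithTop.coe_le_coe.2 (le_top : (2 : ℕ∞) ≤ ⊤))
  rw [pdt_eq_fderiv hf.pdx, pdx_eq_fderiv hf.pdt, e1, e2, (key _).fderiv, (key _).fderiv]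
  exact hsymm (0, 1) (1, 0)

lemma Smooth2.continuous_left {f : ℝ → ℝ → ℝ} (hf : Smooth2 f) (t : ℝ) :
    Continuous (fun x => f x t) :=
  continuous_iff_continuousAt.2 fun x => (hf.hasDerivAt_pdx x t).continuousAt

/-! ### Differentiated equations and boundary values -/

/-- The linear equation `g_t = ε g_xx + f` may be differentiated in `x`. -/
lemma linear_pde_pdx {a b ε T : ℝ} {g f : ℝ → ℝ → ℝ} (hg : Smooth2 g) (hf : Smooth2 f)
    (h : ∀ x ∈ Ioo a b, ∀ t ∈ Ioo (0:ℝ) T, pdt g x t = ε * pdx (pdx g) x t + f x t) :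
    ∀ x ∈ Ioo a b, ∀ t ∈ Ioo (0:ℝ) T,
      pdt (pdx g) x t = ε * pdx (pdx (pdx g)) x t + pdx f x t := by
  intro x hx t ht
  rw [hg.pdt_pdx]
  have h1 : HasDerivAt (fun y => ε * pdx (pdx g) y t + f y t)
      (ε * pdx (pdx (pdx g)) x t + pdx f x t) x :=
    ((hg.pdx.pdx.hasDerivAt_pdx x t).const_mul ε).add (hf.hasDerivAt_pdx x t)
  refine (h1.congr_of_eventuallyEq ?_).deriv
  filter_upwards [isOpen_Ioo.mem_nhds hx] with y hy using h y hy t ht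

/-- Under the Neumann condition, the equation `g_t = ε g_xx + f` forces `g_xxx = 0` at points where
`g_x` vanishes for all times in `(0, T)` and `f_x` vanishes. -/
lemma bdry_third {a b ε T : ℝ} (hab : a < b) (hε : ε ≠ 0) {g f : ℝ → ℝ → ℝ}
    (hg : Smooth2 g) (hf : Smooth2 f)
    (h : ∀ x ∈ Ioo a b, ∀ t ∈ Ioo (0:ℝ) T, pdt g x t = ε * pdx (pdx g) x t + f x t)
    {c : ℝ} (hc : c ∈ Icc a b) (hgc : ∀ t ∈ Ioo (0:ℝ) T, pdx g c t = 0)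
    {t : ℝ} (ht : t ∈ Ioo (0:ℝ) T) (hfc : pdx f c t = 0) :
    pdx (pdx (pdx g)) c t = 0 := by
  have h1 : EqOn (fun x => pdt (pdx g) x t)
      (fun x => ε * pdx (pdx (pdx g)) x t + pdx f x t) (Ioo a b) :=
    fun x hx => linear_pde_pdx hg hf h x hx t ht
  have h2 := h1.closure (hg.pdx.pdt.continuous_left t)
    ((continuous_const.mul (hg.pdx.pdx.pdx.continuous_left t)).add (hf.pdx.continuous_left t))
  rw [closure_Ioo hab.ne] at h2
  have h3 : pdt (pdx g) c t = ε * pdx (pdx (pdx g)) c t + pdx f c t := h2 hc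
  have h4 : pdt (pdx g) c t = 0 := by
    refine ((hasDerivAt_const t (0:ℝ)).congr_of_eventuallyEq ?_).deriv
    filter_upwards [isOpen_Ioo.mem_nhds ht] with s hs using hgc s hs
  rw [h4, hfc, add_zero] at h3
  exact (mul_eq_zero.1 h3.symm).resolve_left hε

/-! ### Differentiation under the integral sign -/

lemma hasDerivAt_integral_param {a b : ℝ} {F F' : ℝ → ℝ → ℝ}
    (hF : Continuous (Function.uncurry F)) (hF' : Continuous (Function.uncurry F'))
    (h : ∀ x s, HasDerivAt (fun s => F x s) (F' x s) s) (t : ℝ) :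
    HasDerivAt (fun s => ∫ x in a..b, F x s) (∫ x in a..b, F' x t) t := by
  have hc : ∀ s, Continuous (fun x => F x s) := fun s =>
    hF.comp (Continuous.prodMk continuous_id continuous_const)
  have hc' : ∀ s, Continuous (fun x => F' x s) := fun s =>
    hF'.comp (Continuous.prodMk continuous_id continuous_const)
  obtain ⟨C, hC⟩ := ((isCompact_uIcc (a := a) (b := b)).prod
    (isCompact_Icc (a := t - 1) (b := t + 1))).exists_bound_of_continuousOn hF'.continuousOn
  refine (intervalIntegral.hasDerivAt_integral_of_dominated_loc_of_deriv_le
    (F := fun s x => F x s) (F' := fun s x => F' x s) (bound := fun _ => C)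
    (Icc_mem_nhds (sub_one_lt t) (lt_add_one t)) ?_ ?_ ?_ ?_ ?_ ?_).2
  · exact Filter.Eventually.of_forall fun s => (hc s).aestronglyMeasurable
  · exact (hc t).intervalIntegrable a b
  · exact (hc' t).aestronglyMeasurable
  · exact Filter.Eventually.of_forall fun x hx s hs =>
      hC (x, s) ⟨uIoc_subset_uIcc hx, hs⟩
  · exact intervalIntegrable_const
  · exact Filter.Eventually.of_forall fun x _ s _ => h x s

/-! ### The spatial computation at a fixed time -/

/-- `f` is interval integrable on `(a, b)` with integral `I`; closed under the linear operations,
so that linear combinations of integrals can be merged into a single one. -/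
def HasInt (a b : ℝ) (f : ℝ → ℝ) (I : ℝ) : Prop :=
  IntervalIntegrable f volume a b ∧ ∫ x in a..b, f x = I

lemma HasInt.add {a b I J : ℝ} {f g : ℝ → ℝ} (hf : HasInt a b f I) (hg : HasInt a b g J) :
    HasInt a b (fun x => f x + g x) (I + J) :=
  ⟨hf.1.add hg.1, (intervalIntegral.integral_add hf.1 hg.1).trans (by rw [hf.2, hg.2])⟩

lemma HasInt.sub {a b I J : ℝ} {f g : ℝ → ℝ} (hf : HasInt a b f I) (hg : HasInt a b g J) :
    HasInt a b (fun x => f x - g x) (I - J) :=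
  ⟨hf.1.sub hg.1, (intervalIntegral.integral_sub hf.1 hg.1).trans (by rw [hf.2, hg.2])⟩

lemma HasInt.const_mul {a b I : ℝ} {f : ℝ → ℝ} (c : ℝ) (hf : HasInt a b f I) :
    HasInt a b (fun x => c * f x) (c * I) :=
  ⟨hf.1.const_mul c, (intervalIntegral.integral_const_mul c f).trans (by rw [hf.2])⟩

lemma HasInt.of_continuous {a b : ℝ} {f : ℝ → ℝ} (hf : Continuous f) :
    HasInt a b f (∫ x in a..b, f x) :=
  ⟨hf.intervalIntegrable a b, rfl⟩

lemma HasInt.eq_zero {a b I : ℝ} {f : ℝ → ℝ} (hf : HasInt a b f I)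
    (h0 : ∫ x in a..b, f x = 0) : I = 0 :=
  hf.2.symm.trans h0

/-- The energy identity at a fixed time. `Wi`, `Vi`, `Ui`, `Hi` stand for the `i`-th space
derivatives of `w`, `v`, `u`, `Θ`, a suffix `t` for a time derivative, and `g, g1, g2`,
`h, h1, h2` for `γ`, `ĥ` and their derivatives. -/
lemma integral_identity {a b α ε : ℝ} (hab : a < b) {g g1 g2 h h1 h2 : ℝ → ℝ}
    {W W1 W2 Wt W1t V1 V2 V3 V4 V2t U1 U2 U3 U4 U5 U2t U3t H H1 H2 Ht : ℝ → ℝ}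
    (cg2 : Continuous g2) (ch2 : Continuous h2)
    (cW2 : Continuous W2) (cW1t : Continuous W1t) (cV2t : Continuous V2t)
    (cU2t : Continuous U2t) (cU3t : Continuous U3t)
    (cH2 : Continuous H2) (cHt : Continuous Ht)
    (dg : ∀ x, HasDerivAt g (g1 x) x) (dg1 : ∀ x, HasDerivAt g1 (g2 x) x)
    (dh : ∀ x, HasDerivAt h (h1 x) x) (dh1 : ∀ x, HasDerivAt h1 (h2 x) x)
    (dW : ∀ x, HasDerivAt W (W1 x) x) (dW1 : ∀ x, HasDerivAt W1 (W2 x) x)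
    (dWt : ∀ x, HasDerivAt Wt (W1t x) x)
    (dV1 : ∀ x, HasDerivAt V1 (V2 x) x) (dV2 : ∀ x, HasDerivAt V2 (V3 x) x)
    (dV3 : ∀ x, HasDerivAt V3 (V4 x) x)
    (dU1 : ∀ x, HasDerivAt U1 (U2 x) x) (dU2 : ∀ x, HasDerivAt U2 (U3 x) x)
    (dU3 : ∀ x, HasDerivAt U3 (U4 x) x) (dU4 : ∀ x, HasDerivAt U4 (U5 x) x)
    (dH : ∀ x, HasDerivAt H (H1 x) x) (dH1 : ∀ x, HasDerivAt H1 (H2 x) x)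
    (eW : ∀ x ∈ Ioo a b, Wt x = ε * W2 x + (g1 (H x) * H1 x * V1 x + g (H x) * V2 x)
      + (h1 (H x) * H1 x * U1 x + h (H x) * U2 x) - α * W x)
    (eV : ∀ x ∈ Ioo a b, V2t x = ε * V4 x + W2 x)
    (eU2 : ∀ x ∈ Ioo a b, U2t x = ε * U4 x + V2 x)
    (eU3 : ∀ x ∈ Ioo a b, U3t x = ε * U5 x + V3 x)
    (bW : W1 a = 0 ∧ W1 b = 0) (bV : V3 a = 0 ∧ V3 b = 0) (bU : U3 a = 0 ∧ U3 b = 0) :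
    ((1/2 : ℝ) * (∫ x in a..b, 2 * W1 x * W1t x)
        + (1/2 : ℝ) * (∫ x in a..b, (g1 (H x) * Ht x * V2 x ^ 2 + g (H x) * (2 * V2 x * V2t x)))
        + (∫ x in a..b, ((h1 (H x) * Ht x * U2 x + h (H x) * U2t x) * V2 x
            + h (H x) * U2 x * V2t x))
        + ε * (∫ x in a..b, (h1 (H x) * Ht x * U3 x ^ 2 + h (H x) * (2 * U3 x * U3t x))))
        + α * (∫ x in a..b, (W1 x) ^ 2)
        + ε * (∫ x in a..b, (W2 x) ^ 2)
        + ε * (∫ x in a..b, g (H x) * (V3 x) ^ 2)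
        + 2 * ε ^ 2 * (∫ x in a..b, h (H x) * (U4 x) ^ 2)
      = (∫ x in a..b, h (H x) * (V2 x) ^ 2)
        + (1/2 : ℝ) * (∫ x in a..b, g1 (H x) * Ht x * (V2 x) ^ 2)
        + (∫ x in a..b, h1 (H x) * Ht x * U2 x * V2 x)
        + (∫ x in a..b, g1 (H x) * H1 x * V2 x * W1 x)
        + (∫ x in a..b, h1 (H x) * H1 x * U2 x * W1 x)
        + (∫ x in a..b, g1 (H x) * H2 x * V1 x * W1 x)
        + (∫ x in a..b, h1 (H x) * H2 x * U1 x * W1 x)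
        + (∫ x in a..b, g2 (H x) * (H1 x) ^ 2 * V1 x * W1 x)
        + (∫ x in a..b, h2 (H x) * (H1 x) ^ 2 * U1 x * W1 x)
        + ε * (∫ x in a..b, h1 (H x) * Ht x * (U3 x) ^ 2)
        - ε * (∫ x in a..b, g1 (H x) * H1 x * V2 x * V3 x)
        - ε * (∫ x in a..b, h1 (H x) * H1 x * U2 x * V3 x)
        - ε * (∫ x in a..b, h1 (H x) * H1 x * U3 x * V2 x)
        - 2 * ε ^ 2 * (∫ x in a..b, h1 (H x) * H1 x * U3 x * U4 x) := by
  have cont : ∀ {f f' : ℝ → ℝ}, (∀ x, HasDerivAt f (f' x) x) → Continuous f :=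
    fun hd => continuous_iff_continuousAt.2 fun x => (hd x).continuousAt
  have cg := cont dg
  have cg1 := cont dg1
  have ch := cont dh
  have ch1 := cont dh1
  have cW := cont dW
  have cW1 := cont dW1
  have cWt := cont dWt
  have cV1 := cont dV1
  have cV2 := cont dV2
  have cV3 := cont dV3
  have cU1 := cont dU1
  have cU2 := cont dU2
  have cU3 := cont dU3
  have cU4 := cont dU4
  have cH := cont dH
  have cH1 := cont dH1
  rw [← sub_eq_zero]
  -- The integrand is found by unification while the integrals are merged.
  apply HasInt.eq_zero (a := a) (b := b)
  · repeat' first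
      | with_reducible apply HasInt.add
      | with_reducible apply HasInt.sub
      | with_reducible apply HasInt.const_mul
      | with_reducible exact HasInt.of_continuous (by fun_prop)
  · -- The primitive `G`: all its summands carry a factor vanishing at both endpoints.
    rw [intervalIntegral.integral_eq_sub_of_hasDerivAt_of_le hab.le
      (f := fun x => W1 x * Wt x + α * (W x * W1 x) - W1 x * (g1 (H x) * H1 x * V1 x)
        - W1 x * (h1 (H x) * H1 x * U1 x) + ε * (g (H x) * V2 x * V3 x)
        + ε * (h (H x) * U2 x * V3 x) + ε * (h (H x) * U3 x * V2 x)
        + 2 * ε ^ 2 * (h (H x) * U3 x * U4 x))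
      (Continuous.continuousOn (by fun_prop)) ?_
      (Continuous.intervalIntegrable (by fun_prop) a b)]
    · simp [bW.1, bW.2, bV.1, bV.2, bU.1, bU.2]
    · intro x hx
      have Dg : HasDerivAt (fun x => g (H x)) (g1 (H x) * H1 x) x := (dg _).comp x (dH x)
      have Dg1 : HasDerivAt (fun x => g1 (H x)) (g2 (H x) * H1 x) x := (dg1 _).comp x (dH x)
      have Dh : HasDerivAt (fun x => h (H x)) (h1 (H x) * H1 x) x := (dh _).comp x (dH x)
      have Dh1 : HasDerivAt (fun x => h1 (H x)) (h2 (H x) * H1 x) x := (dh1 _).comp x (dH x)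
      have D := ((((((((dW1 x).mul (dWt x)).add (((dW x).mul (dW1 x)).const_mul α)).sub
        ((dW1 x).mul ((Dg1.mul (dH1 x)).mul (dV1 x)))).sub
        ((dW1 x).mul ((Dh1.mul (dH1 x)).mul (dU1 x)))).add
        (((Dg.mul (dV2 x)).mul (dV3 x)).const_mul ε)).add
        (((Dh.mul (dU2 x)).mul (dV3 x)).const_mul ε)).add
        (((Dh.mul (dU3 x)).mul (dV2 x)).const_mul ε)).add
        (((Dh.mul (dU3 x)).mul (dU4 x)).const_mul (2 * ε ^ 2))
      refine HasDerivAt.congr_deriv D ?_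
      simp only [Pi.mul_apply]
      rw [eW x hx, eV x hx, eU2 x hx, eU3 x hx]
      ring

/-! ### The energy identity -/

/-- The full energy identity (Lemma 3.4 of the paper) for the ε-regularized system. -/
theorem eps_energy_identity (a b D α ε T : ℝ) (hab : a < b) (hD : 0 < D) (hα : 0 ≤ α)
    (hε : ε ∈ Ioo (0:ℝ) 1) (hT : 0 < T)
    (γ hγ Γ : ℝ → ℝ)
    (hγreg : ContDiff ℝ 2 γ) (hhreg : ContDiff ℝ 2 hγ) (hΓreg : ContDiff ℝ 1 Γ)
    (w v u Θ : ℝ → ℝ → ℝ)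
    (hsol : IsEpsSolution a b D α ε T γ hγ Γ w v u Θ) :
    ∀ t ∈ Ioo (0:ℝ) T, ∃ y' : ℝ,
      HasDerivAt (fun s =>
        (1/2 : ℝ) * (∫ x in a..b, (pdx w x s) ^ 2)
        + (1/2 : ℝ) * (∫ x in a..b, γ (Θ x s) * (pdx (pdx v) x s) ^ 2)
        + (∫ x in a..b, hγ (Θ x s) * pdx (pdx u) x s * pdx (pdx v) x s)
        + ε * (∫ x in a..b, hγ (Θ x s) * (pdx (pdx (pdx u)) x s) ^ 2)) y' t ∧
      y' + α * (∫ x in a..b, (pdx w x t) ^ 2)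
        + ε * (∫ x in a..b, (pdx (pdx w) x t) ^ 2)
        + ε * (∫ x in a..b, γ (Θ x t) * (pdx (pdx (pdx v)) x t) ^ 2)
        + 2 * ε ^ 2 * (∫ x in a..b, hγ (Θ x t) * (pdx (pdx (pdx (pdx u))) x t) ^ 2)
      = (∫ x in a..b, hγ (Θ x t) * (pdx (pdx v) x t) ^ 2)
        + (1/2 : ℝ) * (∫ x in a..b, deriv γ (Θ x t) * pdt Θ x t * (pdx (pdx v) x t) ^ 2)
        + (∫ x in a..b, deriv hγ (Θ x t) * pdt Θ x t * pdx (pdx u) x t * pdx (pdx v) x t)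
        + (∫ x in a..b, deriv γ (Θ x t) * pdx Θ x t * pdx (pdx v) x t * pdx w x t)
        + (∫ x in a..b, deriv hγ (Θ x t) * pdx Θ x t * pdx (pdx u) x t * pdx w x t)
        + (∫ x in a..b, deriv γ (Θ x t) * pdx (pdx Θ) x t * pdx v x t * pdx w x t)
        + (∫ x in a..b, deriv hγ (Θ x t) * pdx (pdx Θ) x t * pdx u x t * pdx w x t)
        + (∫ x in a..b, deriv (deriv γ) (Θ x t) * (pdx Θ x t) ^ 2 * pdx v x t * pdx w x t)
        + (∫ x in a..b, deriv (deriv hγ) (Θ x t) * (pdx Θ x t) ^ 2 * pdx u x t * pdx w x t)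
        + ε * (∫ x in a..b, deriv hγ (Θ x t) * pdt Θ x t * (pdx (pdx (pdx u)) x t) ^ 2)
        - ε * (∫ x in a..b,
            deriv γ (Θ x t) * pdx Θ x t * pdx (pdx v) x t * pdx (pdx (pdx v)) x t)
        - ε * (∫ x in a..b,
            deriv hγ (Θ x t) * pdx Θ x t * pdx (pdx u) x t * pdx (pdx (pdx v)) x t)
        - ε * (∫ x in a..b,
            deriv hγ (Θ x t) * pdx Θ x t * pdx (pdx (pdx u)) x t * pdx (pdx v) x t)
        - 2 * ε ^ 2 * (∫ x in a..b,
            deriv hγ (Θ x t) * pdx Θ x t * pdx (pdx (pdx u)) x t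
              * pdx (pdx (pdx (pdx u))) x t) := by
  intro t ht
  obtain ⟨sw, sv, su, sΘ, ew, ev, eu, -, bd⟩ := hsol
  change Smooth2 w at sw
  change Smooth2 v at sv
  change Smooth2 u at su
  change Smooth2 Θ at sΘ
  have dC1 : ∀ {k : ℝ → ℝ}, ContDiff ℝ 2 k → ∀ x, HasDerivAt k (deriv k x) x := fun hk x =>
    (hk.differentiable (by simp) x).hasDerivAt
  have cC1 : ∀ {k : ℝ → ℝ}, ContDiff ℝ 2 k → ContDiff ℝ 1 (deriv k) := fun hk =>
    ((contDiff_succ_iff_deriv (n := 1)).1 hk).2.2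
  have dC2 : ∀ {k : ℝ → ℝ}, ContDiff ℝ 2 k → ∀ x, HasDerivAt (deriv k) (deriv (deriv k) x) x :=
    fun hk x => ((cC1 hk).differentiable (by simp) x).hasDerivAt
  have cC2 : ∀ {k : ℝ → ℝ}, ContDiff ℝ 2 k → Continuous (deriv (deriv k)) := fun hk =>
    (cC1 hk).continuous_deriv le_rfl
  have ev1 := linear_pde_pdx sv sw ev
  have ev2 := linear_pde_pdx sv.pdx sw.pdx ev1
  have eu1 := linear_pde_pdx su sv eu
  have eu2 := linear_pde_pdx su.pdx sv.pdx eu1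
  have eu3 := linear_pde_pdx su.pdx.pdx sv.pdx.pdx eu2
  have dkΘ : ∀ {k : ℝ → ℝ}, ContDiff ℝ 2 k → ∀ x s,
      HasDerivAt (fun s => k (Θ x s)) (deriv k (Θ x s) * pdt Θ x s) s := fun hk x s =>
    (dC1 hk _).comp s (sΘ.hasDerivAt_pdt x s)
  have cγ := hγreg.continuous
  have ch := hhreg.continuous
  have cγ1 := (cC1 hγreg).continuous
  have ch1 := (cC1 hhreg).continuous
  have cΘ : Continuous (Function.uncurry Θ) := ContDiff.continuous sΘ
  have cΘt : Continuous (Function.uncurry (pdt Θ)) := ContDiff.continuous sΘ.pdt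
  have cw1 : Continuous (Function.uncurry (pdx w)) := ContDiff.continuous sw.pdx
  have cw1t : Continuous (Function.uncurry (pdt (pdx w))) := ContDiff.continuous sw.pdx.pdt
  have cv2 : Continuous (Function.uncurry (pdx (pdx v))) := ContDiff.continuous sv.pdx.pdx
  have cv2t : Continuous (Function.uncurry (pdt (pdx (pdx v)))) :=
    ContDiff.continuous sv.pdx.pdx.pdt
  have cu2 : Continuous (Function.uncurry (pdx (pdx u))) := ContDiff.continuous su.pdx.pdx
  have cu2t : Continuous (Function.uncurry (pdt (pdx (pdx u)))) :=
    ContDiff.continuous su.pdx.pdx.pdt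
  have cu3 : Continuous (Function.uncurry (pdx (pdx (pdx u)))) :=
    ContDiff.continuous su.pdx.pdx.pdx
  have cu3t : Continuous (Function.uncurry (pdt (pdx (pdx (pdx u))))) :=
    ContDiff.continuous su.pdx.pdx.pdx.pdt
  simp only [Function.uncurry_def] at cΘ cΘt cw1 cw1t cv2 cv2t cu2 cu2t cu3 cu3t
  have D1 := hasDerivAt_integral_param (a := a) (b := b) (F := fun x s => pdx w x s ^ 2)
    (F' := fun x s => 2 * pdx w x s * pdt (pdx w) x s)
    (by simp only [Function.uncurry_def]; fun_prop) (by simp only [Function.uncurry_def]; fun_prop)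
    (fun x s => ((sw.pdx.hasDerivAt_pdt x s).pow 2).congr_deriv (by simp)) t
  have D2 := hasDerivAt_integral_param (a := a) (b := b)
    (F := fun x s => γ (Θ x s) * (pdx (pdx v) x s) ^ 2)
    (F' := fun x s => deriv γ (Θ x s) * pdt Θ x s * pdx (pdx v) x s ^ 2
      + γ (Θ x s) * (2 * pdx (pdx v) x s * pdt (pdx (pdx v)) x s))
    (by simp only [Function.uncurry_def]; fun_prop) (by simp only [Function.uncurry_def]; fun_prop)
    (fun x s =>
      ((dkΘ hγreg x s).mul ((sv.pdx.pdx.hasDerivAt_pdt x s).pow 2)).congr_deriv (by simp)) t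
  have D3 := hasDerivAt_integral_param (a := a) (b := b)
    (F := fun x s => hγ (Θ x s) * pdx (pdx u) x s * pdx (pdx v) x s)
    (F' := fun x s => (deriv hγ (Θ x s) * pdt Θ x s * pdx (pdx u) x s
      + hγ (Θ x s) * pdt (pdx (pdx u)) x s) * pdx (pdx v) x s
      + hγ (Θ x s) * pdx (pdx u) x s * pdt (pdx (pdx v)) x s)
    (by simp only [Function.uncurry_def]; fun_prop) (by simp only [Function.uncurry_def]; fun_prop)
    (fun x s => ((dkΘ hhreg x s).mul (su.pdx.pdx.hasDerivAt_pdt x s)).mul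
      (sv.pdx.pdx.hasDerivAt_pdt x s)) t
  have D4 := hasDerivAt_integral_param (a := a) (b := b)
    (F := fun x s => hγ (Θ x s) * (pdx (pdx (pdx u)) x s) ^ 2)
    (F' := fun x s => deriv hγ (Θ x s) * pdt Θ x s * pdx (pdx (pdx u)) x s ^ 2
      + hγ (Θ x s) * (2 * pdx (pdx (pdx u)) x s * pdt (pdx (pdx (pdx u))) x s))
    (by simp only [Function.uncurry_def]; fun_prop) (by simp only [Function.uncurry_def]; fun_prop)
    (fun x s =>
      ((dkΘ hhreg x s).mul ((su.pdx.pdx.pdx.hasDerivAt_pdt x s).pow 2)).congr_deriv (by simp)) t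
  refine ⟨_, (((D1.const_mul (1/2 : ℝ)).add (D2.const_mul (1/2 : ℝ))).add D3).add
    (D4.const_mul ε), ?_⟩
  have flux : ∀ {k : ℝ → ℝ} {f : ℝ → ℝ → ℝ}, ContDiff ℝ 2 k → Smooth2 f → ∀ x,
      pdx (fun y s => k (Θ y s) * pdx f y s) x t
        = deriv k (Θ x t) * pdx Θ x t * pdx f x t + k (Θ x t) * pdx (pdx f) x t :=
    fun hk hf x => (((dC1 hk _).comp x (sΘ.hasDerivAt_pdx x t)).mul
      (hf.pdx.hasDerivAt_pdx x t)).deriv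
  have hε0 : ε ≠ 0 := hε.1.ne'
  obtain ⟨bwa, bwb, bva, bvb, -⟩ := bd t ht
  have ha : a ∈ Icc a b := left_mem_Icc.2 hab.le
  have hb : b ∈ Icc a b := right_mem_Icc.2 hab.le
  refine integral_identity (a := a) (b := b) (α := α) (ε := ε) hab
    (g := γ) (g1 := deriv γ) (g2 := deriv (deriv γ))
    (h := hγ) (h1 := deriv hγ) (h2 := deriv (deriv hγ))
    (W := fun x => w x t) (W1 := fun x => pdx w x t) (W2 := fun x => pdx (pdx w) x t)
    (Wt := fun x => pdt w x t) (W1t := fun x => pdt (pdx w) x t)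
    (V1 := fun x => pdx v x t) (V2 := fun x => pdx (pdx v) x t)
    (V3 := fun x => pdx (pdx (pdx v)) x t) (V4 := fun x => pdx (pdx (pdx (pdx v))) x t)
    (V2t := fun x => pdt (pdx (pdx v)) x t)
    (U1 := fun x => pdx u x t) (U2 := fun x => pdx (pdx u) x t)
    (U3 := fun x => pdx (pdx (pdx u)) x t) (U4 := fun x => pdx (pdx (pdx (pdx u))) x t)
    (U5 := fun x => pdx (pdx (pdx (pdx (pdx u)))) x t)
    (U2t := fun x => pdt (pdx (pdx u)) x t) (U3t := fun x => pdt (pdx (pdx (pdx u))) x t)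
    (H := fun x => Θ x t) (H1 := fun x => pdx Θ x t) (H2 := fun x => pdx (pdx Θ) x t)
    (Ht := fun x => pdt Θ x t)
    (cC2 hγreg) (cC2 hhreg) (sw.pdx.pdx.continuous_left t) (sw.pdx.pdt.continuous_left t)
    (sv.pdx.pdx.pdt.continuous_left t)
    (su.pdx.pdx.pdt.continuous_left t)
    (su.pdx.pdx.pdx.pdt.continuous_left t) (sΘ.pdx.pdx.continuous_left t)
    (sΘ.pdt.continuous_left t)
    (dC1 hγreg) (dC2 hγreg) (dC1 hhreg) (dC2 hhreg)
    (fun x => sw.hasDerivAt_pdx x t) (fun x => sw.pdx.hasDerivAt_pdx x t)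
    (fun x => by simpa only [sw.pdt_pdx] using sw.pdt.hasDerivAt_pdx x t)
    (fun x => sv.pdx.hasDerivAt_pdx x t) (fun x => sv.pdx.pdx.hasDerivAt_pdx x t)
    (fun x => sv.pdx.pdx.pdx.hasDerivAt_pdx x t)
    (fun x => su.pdx.hasDerivAt_pdx x t) (fun x => su.pdx.pdx.hasDerivAt_pdx x t)
    (fun x => su.pdx.pdx.pdx.hasDerivAt_pdx x t)
    (fun x => su.pdx.pdx.pdx.pdx.hasDerivAt_pdx x t)
    (fun x => sΘ.hasDerivAt_pdx x t) (fun x => sΘ.pdx.hasDerivAt_pdx x t)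
    (fun x hx => ?_) (fun x hx => ev2 x hx t ht) (fun x hx => eu2 x hx t ht)
    (fun x hx => eu3 x hx t ht) ⟨bwa, bwb⟩ ⟨?_, ?_⟩ ⟨?_, ?_⟩
  · rw [ew x hx t ht, flux hγreg sv, flux hhreg su]
  · exact bdry_third hab hε0 sv sw ev ha (fun s hs => (bd s hs).2.2.1) ht bwa
  · exact bdry_third hab hε0 sv sw ev hb (fun s hs => (bd s hs).2.2.2.1) ht bwb
  · exact bdry_third hab hε0 su sv eu ha (fun s hs => (bd s hs).2.2.2.2.1) ht bva
  · exact bdry_third hab hε0 su sv eu hb (fun s hs => (bd s hs).2.2.2.2.2.1) ht bvb
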